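/- arXiv:2107.14217 — 2 statements merged into one kernel-verified Lean document; each statement's English description precedes it below -/
import Mathlib

section
/- Let φ(x) = π^{−n/2} e^{−|x|²} and let u(x,t) = (w ∗ φ_{√t})(x) be the heat extension of a weight w. For every ε ∈ (0,1) there exists M > 1, depending only on n and ε, such that if w has the M-good doubling property, then |∇_x u(x, r²)| ≤ ε r⁻¹ u(x, r²) for all x ∈ ℝⁿ and r > 0. -/
/-!
Write `E r x = ∫ exp (-(‖x - z‖ / r) ^ 2) w z dz`, so that `heatConv n w r` is a constant multiple
of `E r`. The bound rests on two facts.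

* A Harnack inequality (`heat_harnack`): if `w` has the `M`-good doubling property, then
  `E r y ≤ (1 + 1 / M) * exp ((‖x - y‖ / (M r)) ^ 2) * E r x` for all `x, y`. By the layer cake
  formula the left side is the integral over `t ∈ (0, 1)` of the mass of the superlevel set
  `{t < exp (-(‖y - z‖ / r) ^ 2)}`. This set is enlarged when `t` is replaced by `θ t`, where
  `θ = exp (-(‖x - y‖ / (M r)) ^ 2)`. The enlarged set is a ball about `y` of radius
  `σ > ‖x - y‖ / M`, and the doubling property compares it with the ball of the same radius
  about `x`.

* Convexity (`heat_convexOn`): after completing the square, `exp ((t ‖h‖ / r) ^ 2) * E r (x + t h)`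
  is a superposition of exponentials of affine functions of `t`, hence convex in `t`. Its derivative
  at `0` is that of `t ↦ E r (x + t h)`, so
  `⟪∇E, h⟫ ≤ exp ((‖h‖ / r) ^ 2) * E r (x + h) - E r x`.

Taking `h = (ε / 4) r ∇E / ‖∇E‖` and `M = 16 / ε ^ 2` and bounding `E r (x + h)` by the Harnack
inequality gives the claim, since the right side is then `O(ε²) E r x` while the left side is
`(ε / 4) r ‖∇E‖`.

The Harnack inequality is first proved for integrals in `[0, ∞]`. It shows that the integral
defining `E r` converges either at all points or at none; in the second case the Bochner integral
`heatConv n w r` is identically `0` and there is nothing to prove. No growth estimate on `w` is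
therefore needed.
-/

open MeasureTheory Metric Set Real Filter
noncomputable section

/-- `w` has the `M`-good doubling property: for all `x, R`, all `y ∈ B(x,R)` and all
`s, r ∈ [R/M, MR]`, `(1+1/M)⁻¹ ≤ [w(B(x,r))/w(B(y,s))]·(sⁿ/rⁿ) ≤ 1+1/M`
(stated in multiplied-out form). -/
def GoodDoubling (n : ℕ) (M : ℝ) (w : EuclideanSpace ℝ (Fin n) → ℝ) : Prop :=
  ∀ (x : EuclideanSpace ℝ (Fin n)) (R : ℝ), 0 < R → ∀ y ∈ Metric.ball x R,
    ∀ r ∈ Set.Icc (R/M) (M*R), ∀ s ∈ Set.Icc (R/M) (M*R),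
      (1+1/M)⁻¹ * (∫ z in Metric.ball y s, w z) * r^n ≤ (∫ z in Metric.ball x r, w z) * s^n ∧
      (∫ z in Metric.ball x r, w z) * s^n ≤ (1+1/M) * (∫ z in Metric.ball y s, w z) * r^n

/-- The Gaussian kernel `φ(x) = π^{-n/2} e^{-|x|²}`. -/
def gauss (n : ℕ) (x : EuclideanSpace ℝ (Fin n)) : ℝ :=
  Real.pi ^ (-(n:ℝ)/2) * Real.exp (-‖x‖^2)

/-- `ψ = ∇φ`, the gradient of the Gaussian: `ψ(x) = -2 φ(x) x`. -/
def gaussGrad (n : ℕ) (x : EuclideanSpace ℝ (Fin n)) : EuclideanSpace ℝ (Fin n) :=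
  (-2 * gauss n x) • x

/-- `(w ∗ φ_r)(x)` where `φ_r(x) = r⁻ⁿ φ(x/r)`; the heat extension of `w` at time `r²`. -/
def heatConv (n : ℕ) (w : EuclideanSpace ℝ (Fin n) → ℝ) (r : ℝ)
    (x : EuclideanSpace ℝ (Fin n)) : ℝ :=
  ∫ z, (r^n)⁻¹ * gauss n (r⁻¹ • (x - z)) * w z

/-- `(w ∗ ψ_r)(x)` where `ψ_r(x) = r⁻ⁿ ψ(x/r)`. -/
def psiConv (n : ℕ) (w : EuclideanSpace ℝ (Fin n) → ℝ) (r : ℝ)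
    (x : EuclideanSpace ℝ (Fin n)) : EuclideanSpace ℝ (Fin n) :=
  ∫ z, w z • ((r^n)⁻¹ • gaussGrad n (r⁻¹ • (x - z)))

/-! ### Harnack inequality -/

/-- The mass of a ball for the measure `w dz` is the (Bochner) integral of `w` over the ball. -/
lemma withDensity_ball {n : ℕ} {w : EuclideanSpace ℝ (Fin n) → ℝ} (hw : ∀ x, 0 ≤ w x)
    (hloc : LocallyIntegrable w) (x : EuclideanSpace ℝ (Fin n)) (s : ℝ) :
    (volume.withDensity fun z => ENNReal.ofReal (w z)) (ball x s)
      = ENNReal.ofReal (∫ z in ball x s, w z) := by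
  rw [withDensity_apply _ measurableSet_ball, ofReal_integral_eq_lintegral_ofReal]
  · exact (hloc.integrableOn_isCompact (isCompact_closedBall x s)).mono_set ball_subset_closedBall
  · exact Eventually.of_forall hw

/-- Balls of equal radius `s` whose centres are at distance less than `M s` have almost the same
mass. This is the only consequence of good doubling that is used. -/
lemma GoodDoubling.withDensity_ball_le {n : ℕ} {M : ℝ} (hM : 1 < M)
    {w : EuclideanSpace ℝ (Fin n) → ℝ} (hw : ∀ x, 0 ≤ w x) (hloc : LocallyIntegrable w)
    (hd : GoodDoubling n M w) {x y : EuclideanSpace ℝ (Fin n)} {s : ℝ} (hs : 0 < s)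
    (hxy : ‖x - y‖ < M * s) :
    (volume.withDensity fun z => ENNReal.ofReal (w z)) (ball y s)
      ≤ ENNReal.ofReal (1 + 1 / M) *
        (volume.withDensity fun z => ENNReal.ofReal (w z)) (ball x s) := by
  have hM0 : 0 < M := by linarith
  rw [withDensity_ball hw hloc, withDensity_ball hw hloc, ← ENNReal.ofReal_mul (by positivity)]
  apply ENNReal.ofReal_le_ofReal
  have hmem : s ∈ Icc (M * s / M) (M * (M * s)) := by
    constructor
    · rw [mul_div_cancel_left₀ _ hM0.ne']
    · nlinarith [mul_pos hM0 hs]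
  have h := (hd y (M * s) (by positivity) x (by rwa [mem_ball, dist_eq_norm]) s hmem s hmem).2
  exact le_of_mul_le_mul_right h (by positivity)

/-- Harnack inequality for the heat extension at a fixed time, as an inequality in `[0, ∞]`. -/
lemma heat_harnack {n : ℕ} {M : ℝ} (hM : 1 < M)
    {w : EuclideanSpace ℝ (Fin n) → ℝ} (hw : ∀ x, 0 ≤ w x) (hloc : LocallyIntegrable w)
    (hd : GoodDoubling n M w) {r : ℝ} (hr : 0 < r) (x y : EuclideanSpace ℝ (Fin n)) :
    ∫⁻ z, ENNReal.ofReal (rexp (-(‖y - z‖ / r) ^ 2))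
        ∂(volume.withDensity fun z => ENNReal.ofReal (w z))
      ≤ ENNReal.ofReal ((1 + 1 / M) * rexp ((‖x - y‖ / (M * r)) ^ 2)) *
        ∫⁻ z, ENNReal.ofReal (rexp (-(‖x - z‖ / r) ^ 2))
          ∂(volume.withDensity fun z => ENNReal.ofReal (w z)) := by
  have hM0 : 0 < M := by linarith
  set μ := volume.withDensity fun z => ENNReal.ofReal (w z) with hμ
  set q : ℝ := (‖x - y‖ / (M * r)) ^ 2 with hq
  have hq0 : 0 ≤ q := sq_nonneg _
  have hmeas : ∀ a : EuclideanSpace ℝ (Fin n), Measurable fun z => rexp (-(‖a - z‖ / r) ^ 2) :=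
    fun a => by fun_prop
  rw [ENNReal.ofReal_mul (by positivity), mul_assoc,
    ← lintegral_const_mul' _ _ ENNReal.ofReal_ne_top]
  simp_rw [← ENNReal.ofReal_mul (Real.exp_pos q).le]
  rw [lintegral_eq_lintegral_meas_lt μ (Eventually.of_forall fun z => (Real.exp_pos _).le)
      (hmeas y).aemeasurable,
    lintegral_eq_lintegral_meas_lt μ (Eventually.of_forall fun z => by positivity)
      ((hmeas x).const_mul _).aemeasurable,
    ← lintegral_const_mul' _ _ ENNReal.ofReal_ne_top]
  refine setLIntegral_mono' measurableSet_Ioi fun t ht => ?_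
  have ht : 0 < t := ht
  rcases le_or_gt 1 t with h1 | h1
  · have : {z | t < rexp (-(‖y - z‖ / r) ^ 2)} = ∅ := by
      ext z
      simp only [mem_ofPred_eq, mem_empty_iff_false, iff_false, not_lt]
      exact (Real.exp_le_one_iff.2 (by nlinarith [sq_nonneg (‖y - z‖ / r)])).trans h1
    rw [this, measure_empty]
    exact zero_le
  have hlog : Real.log t < 0 := Real.log_neg ht h1
  -- The radius with `{z | exp (-q) * t < exp (-(‖a - z‖ / r) ^ 2)} = ball a σ`.
  set σ : ℝ := r * √(q - Real.log t) with hσ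
  have hσ0 : 0 < σ := mul_pos hr (Real.sqrt_pos.2 (by linarith))
  have hball : ∀ a z : EuclideanSpace ℝ (Fin n),
      z ∈ ball a σ ↔ t < rexp q * rexp (-(‖a - z‖ / r) ^ 2) := by
    intro a z
    rw [← Real.exp_add, ← Real.log_lt_iff_lt_exp ht, mem_ball, dist_comm, dist_eq_norm, hσ,
      mul_comm r, ← div_lt_iff₀ hr, Real.lt_sqrt (by positivity)]
    constructor <;> intro h <;> linarith
  have hclose : ‖x - y‖ < M * σ := by
    have : ‖x - y‖ / (M * r) < √(q - Real.log t) := by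
      rw [Real.lt_sqrt (by positivity)]
      linarith
    rw [div_lt_iff₀ (by positivity)] at this
    rw [hσ]
    linarith
  calc μ {z | t < rexp (-(‖y - z‖ / r) ^ 2)} ≤ μ (ball y σ) := by
        refine measure_mono fun z hz => ?_
        rw [hball]
        refine lt_of_lt_of_le hz ?_
        exact le_mul_of_one_le_left (Real.exp_pos _).le (Real.one_le_exp hq0)
    _ ≤ ENNReal.ofReal (1 + 1 / M) * μ (ball x σ) :=
        hd.withDensity_ball_le hM hw hloc hσ0 hclose
    _ = ENNReal.ofReal (1 + 1 / M) * μ {z | t < rexp q * rexp (-(‖x - z‖ / r) ^ 2)} := by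
        congr 2
        ext z
        exact hball x z

lemma lintegral_heat {n : ℕ} {w : EuclideanSpace ℝ (Fin n) → ℝ}
    (hloc : LocallyIntegrable w) (r : ℝ) (x : EuclideanSpace ℝ (Fin n)) :
    ∫⁻ z, ENNReal.ofReal (rexp (-(‖x - z‖ / r) ^ 2))
        ∂(volume.withDensity fun z => ENNReal.ofReal (w z))
      = ∫⁻ z, ENNReal.ofReal (rexp (-(‖x - z‖ / r) ^ 2) * w z) := by
  rw [lintegral_withDensity_eq_lintegral_mul₀
    hloc.aestronglyMeasurable.aemeasurable.ennreal_ofReal (by fun_prop)]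
  refine lintegral_congr fun z => ?_
  rw [Pi.mul_apply, mul_comm, ENNReal.ofReal_mul (Real.exp_pos _).le]

lemma aestronglyMeasurable_heat {n : ℕ} {w : EuclideanSpace ℝ (Fin n) → ℝ}
    (hloc : LocallyIntegrable w) (r : ℝ) (x : EuclideanSpace ℝ (Fin n)) :
    AEStronglyMeasurable (fun z => rexp (-(‖x - z‖ / r) ^ 2) * w z) volume :=
  (Continuous.aestronglyMeasurable (by fun_prop)).mul hloc.aestronglyMeasurable

/-- By the Harnack inequality, convergence of the heat integral at one point gives convergence at
every point. -/
lemma integrable_heat_of_integrable {n : ℕ} {M : ℝ} (hM : 1 < M)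
    {w : EuclideanSpace ℝ (Fin n) → ℝ} (hw : ∀ x, 0 ≤ w x) (hloc : LocallyIntegrable w)
    (hd : GoodDoubling n M w) {r : ℝ} (hr : 0 < r) {x : EuclideanSpace ℝ (Fin n)}
    (hx : Integrable fun z => rexp (-(‖x - z‖ / r) ^ 2) * w z) (y : EuclideanSpace ℝ (Fin n)) :
    Integrable fun z => rexp (-(‖y - z‖ / r) ^ 2) * w z := by
  have hnn : ∀ a : EuclideanSpace ℝ (Fin n),
      0 ≤ᵐ[volume] fun z => rexp (-(‖a - z‖ / r) ^ 2) * w z :=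
    fun a => Eventually.of_forall fun z => mul_nonneg (Real.exp_pos _).le (hw z)
  refine ⟨aestronglyMeasurable_heat hloc r y, ?_⟩
  have hfin := hx.2
  rw [hasFiniteIntegral_iff_ofReal (hnn _), ← lintegral_heat hloc] at hfin ⊢
  exact (heat_harnack hM hw hloc hd hr x y).trans_lt
    (ENNReal.mul_lt_top ENNReal.ofReal_lt_top hfin)

/-- Real-valued form of `heat_harnack`. -/
lemma integral_heat_harnack {n : ℕ} {M : ℝ} (hM : 1 < M)
    {w : EuclideanSpace ℝ (Fin n) → ℝ} (hw : ∀ x, 0 ≤ w x) (hloc : LocallyIntegrable w)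
    (hd : GoodDoubling n M w) {r : ℝ} (hr : 0 < r) {x : EuclideanSpace ℝ (Fin n)}
    (hx : Integrable fun z => rexp (-(‖x - z‖ / r) ^ 2) * w z) (y : EuclideanSpace ℝ (Fin n)) :
    ∫ z, rexp (-(‖y - z‖ / r) ^ 2) * w z
      ≤ ((1 + 1 / M) * rexp ((‖x - y‖ / (M * r)) ^ 2)) *
        ∫ z, rexp (-(‖x - z‖ / r) ^ 2) * w z := by
  have hM0 : 0 < M := by linarith
  have hnn : ∀ a : EuclideanSpace ℝ (Fin n),
      0 ≤ᵐ[volume] fun z => rexp (-(‖a - z‖ / r) ^ 2) * w z :=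
    fun a => Eventually.of_forall fun z => mul_nonneg (Real.exp_pos _).le (hw z)
  have h := heat_harnack hM hw hloc hd hr x y
  rw [lintegral_heat hloc, lintegral_heat hloc,
    ← ofReal_integral_eq_lintegral_ofReal hx (hnn x),
    ← ofReal_integral_eq_lintegral_ofReal
      (integrable_heat_of_integrable hM hw hloc hd hr hx y) (hnn y),
    ← ENNReal.ofReal_mul (by positivity)] at h
  exact (ENNReal.ofReal_le_ofReal_iff
    (mul_nonneg (by positivity) (integral_nonneg_of_ae (hnn x)))).1 h

/-! ### Convexity along lines -/

/-- Completing the square turns `exp ((t ‖h‖ / r) ^ 2) * E r (x + t h)` into the Laplace transform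
of a positive measure, so it is convex in `t`. -/
lemma heat_convexOn {n : ℕ} {w : EuclideanSpace ℝ (Fin n) → ℝ} (hw : ∀ x, 0 ≤ w x) (r : ℝ)
    (hint : ∀ y : EuclideanSpace ℝ (Fin n), Integrable fun z => rexp (-(‖y - z‖ / r) ^ 2) * w z)
    (x h : EuclideanSpace ℝ (Fin n)) :
    ConvexOn ℝ univ fun t : ℝ =>
      rexp ((t * ‖h‖ / r) ^ 2) * ∫ z, rexp (-(‖x + t • h - z‖ / r) ^ 2) * w z := by
  have hsq : ∀ (t : ℝ) (z : EuclideanSpace ℝ (Fin n)),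
      rexp ((t * ‖h‖ / r) ^ 2) * (rexp (-(‖x + t • h - z‖ / r) ^ 2) * w z)
        = rexp (-(‖x - z‖ / r) ^ 2 + t * (-2 * inner ℝ (x - z) h / r ^ 2)) * w z := by
    intro t z
    have e : x + t • h - z = (x - z) + t • h := by abel
    rw [← mul_assoc, ← Real.exp_add, e]
    congr 2
    have := norm_add_sq_real (x - z) (t • h)
    rw [inner_smul_right, norm_smul, mul_pow, Real.norm_eq_abs, sq_abs] at this
    simp only [div_pow, this]
    ring
  have hI : ∀ t : ℝ, Integrable fun z =>
      rexp (-(‖x - z‖ / r) ^ 2 + t * (-2 * inner ℝ (x - z) h / r ^ 2)) * w z := by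
    intro t
    simp_rw [← hsq]
    exact (hint (x + t • h)).const_mul _
  have hg : (fun t : ℝ =>
      rexp ((t * ‖h‖ / r) ^ 2) * ∫ z, rexp (-(‖x + t • h - z‖ / r) ^ 2) * w z)
      = fun t => ∫ z,
        rexp (-(‖x - z‖ / r) ^ 2 + t * (-2 * inner ℝ (x - z) h / r ^ 2)) * w z := by
    funext t
    rw [← integral_const_mul]
    simp_rw [hsq]
  rw [hg]
  refine ⟨convex_univ, fun s _ t _ a b ha hb hab => ?_⟩
  simp only [smul_eq_mul]
  rw [← integral_const_mul, ← integral_const_mul,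
    ← integral_add ((hI s).const_mul a) ((hI t).const_mul b)]
  refine integral_mono (hI _) (((hI s).const_mul a).add ((hI t).const_mul b)) fun z => ?_
  set p := -(‖x - z‖ / r) ^ 2
  set c := -2 * inner ℝ (x - z) h / r ^ 2
  have hc := convexOn_exp.2 (mem_univ (p + s * c)) (mem_univ (p + t * c)) ha hb hab
  simp only [smul_eq_mul] at hc
  have e : a * (p + s * c) + b * (p + t * c) = p + (a * s + b * t) * c := by
    linear_combination p * hab
  rw [e] at hc
  have := mul_le_mul_of_nonneg_right hc (hw z)
  dsimp only
  linarith

/-- `heatConv n w r` is a constant multiple of the unnormalised heat integral. -/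
lemma heatConv_eq {n : ℕ} {w : EuclideanSpace ℝ (Fin n) → ℝ} {r : ℝ} (hr : 0 < r)
    (x : EuclideanSpace ℝ (Fin n)) :
    heatConv n w r x = (r ^ n)⁻¹ * Real.pi ^ (-(n : ℝ) / 2) *
      ∫ z, rexp (-(‖x - z‖ / r) ^ 2) * w z := by
  rw [heatConv, ← integral_const_mul]
  congr 1
  funext z
  rw [gauss, norm_smul, norm_inv, Real.norm_eq_abs, abs_of_pos hr, div_eq_inv_mul]
  ring_nf

/-- The derivative at `0` of a convex function on a line is at most its increment over `[0, 1]`;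
the Gaussian factor does not contribute to the derivative at `0`. -/
lemma inner_gradient_le {n : ℕ} {u : EuclideanSpace ℝ (Fin n) → ℝ} {r : ℝ}
    {x h : EuclideanSpace ℝ (Fin n)} (hu : DifferentiableAt ℝ u x)
    (hconv : ConvexOn ℝ univ fun t : ℝ => rexp ((t * ‖h‖ / r) ^ 2) * u (x + t • h)) :
    inner ℝ (gradient u x) h ≤ rexp ((‖h‖ / r) ^ 2) * u (x + h) - u x := by
  have h1 : HasDerivAt (fun t : ℝ => x + t • h) h 0 := by
    simpa using ((hasDerivAt_id (0 : ℝ)).smul_const h).const_add x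
  have h2 : HasDerivAt (fun t : ℝ => u (x + t • h)) (inner ℝ (gradient u x) h) 0 := by
    have hF : HasFDerivAt u (InnerProductSpace.toDual ℝ _ (gradient u x)) (x + (0 : ℝ) • h) := by
      simpa using hu.hasGradientAt.hasFDerivAt
    have := hF.comp_hasDerivAt (0 : ℝ) h1
    rwa [InnerProductSpace.toDual_apply_apply] at this
  have h3 : HasDerivAt (fun t : ℝ => rexp ((t * ‖h‖ / r) ^ 2)) 0 0 := by
    have := ((((hasDerivAt_id (0 : ℝ)).mul_const ‖h‖).div_const r).pow 2).exp
    simpa using this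
  have h4 := hconv.le_slope_of_hasDerivAt (mem_univ 0) (mem_univ 1) one_pos (h3.mul h2)
  simpa [slope_def_field] using h4

/-! ### The gradient bound -/

/-- The arithmetic behind the choice `‖h‖ = τ r`, `M = 1 / τ ^ 2`. -/
lemma harnack_const_le {τ : ℝ} (h0 : 0 < τ) (h1 : τ ≤ 1 / 4) :
    rexp (τ ^ 2) * ((1 + τ ^ 2) * rexp ((τ ^ 3) ^ 2)) - 1 ≤ 4 * τ ^ 2 := by
  have ha : τ ^ 2 ≤ 1 / 16 := by nlinarith
  have hb : (τ ^ 3) ^ 2 ≤ τ ^ 2 / 16 := by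
    have : (τ ^ 3) ^ 2 = τ ^ 2 * (τ ^ 2 * τ ^ 2) := by ring
    nlinarith [sq_nonneg τ, mul_nonneg (sq_nonneg τ) (sq_nonneg τ)]
  set a := τ ^ 2 with hadef
  have ha0 : 0 < a := by positivity
  have hexp : rexp a * rexp ((τ ^ 3) ^ 2) ≤ 1 + 3 / 2 * a := by
    rw [← Real.exp_add]
    have h : a + (τ ^ 3) ^ 2 ≤ 17 / 16 * a := by linarith
    have h2 := Real.exp_bound_div_one_sub_of_interval (x := 17 / 16 * a) (by positivity)
      (by linarith)
    refine (Real.exp_le_exp.2 h).trans (h2.trans ?_)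
    rw [div_le_iff₀ (by linarith)]
    nlinarith
  nlinarith [mul_le_mul_of_nonneg_left hexp (by positivity : 0 ≤ 1 + a)]

/-- For every `ε ∈ (0,1)` and dimension `n` there is `M > 1` depending only
on `n, ε` such that if `w` has the `M`-good doubling property then the heat extension
`u(x,r²) = (w ∗ φ_r)(x)` satisfies `|∇_x u(x,r²)| ≤ ε r⁻¹ u(x,r²)` for all `x`, `r > 0`. -/
theorem gradient_heat_extension_small (n : ℕ) (ε : ℝ) (hε : ε ∈ Set.Ioo (0:ℝ) 1) :
    ∃ M > (1:ℝ), ∀ w : EuclideanSpace ℝ (Fin n) → ℝ,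
      (∀ x, 0 ≤ w x) → MeasureTheory.LocallyIntegrable w → GoodDoubling n M w →
      ∀ (x : EuclideanSpace ℝ (Fin n)) (r : ℝ), 0 < r →
        ‖gradient (fun y => heatConv n w r y) x‖ ≤ ε * r⁻¹ * heatConv n w r x := by
  obtain ⟨hε0, hε1⟩ := hε
  set τ : ℝ := ε / 4 with hτ
  have hτ0 : 0 < τ := by positivity
  have hτ1 : τ ≤ 1 / 4 := by linarith
  have hM : 1 < 1 / τ ^ 2 := by
    rw [lt_div_iff₀ (by positivity)]
    nlinarith
  refine ⟨1 / τ ^ 2, hM, fun w hw hloc hd x r hr => ?_⟩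
  have hc0 : 0 ≤ (r ^ n)⁻¹ * Real.pi ^ (-(n : ℝ) / 2) := by positivity
  have hnn : 0 ≤ heatConv n w r x := by
    rw [heatConv_eq hr]
    exact mul_nonneg hc0 (integral_nonneg fun z => mul_nonneg (Real.exp_pos _).le (hw z))
  have hrhs : 0 ≤ ε * r⁻¹ * heatConv n w r x := by positivity
  set g := gradient (fun y => heatConv n w r y) x with hg
  by_cases hg0 : g = 0
  · rwa [hg0, norm_zero]
  -- Mathlib's gradient is `0` at points of non-differentiability.
  have hdiff : DifferentiableAt ℝ (fun y => heatConv n w r y) x := by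
    by_contra hnd
    exact hg0 (gradient_eq_zero_of_not_differentiableAt hnd)
  by_cases hx : Integrable fun z => rexp (-(‖x - z‖ / r) ^ 2) * w z
  swap
  -- If the heat integral diverges at `x` it diverges everywhere, and `heatConv` is identically `0`.
  · refine absurd ?_ hg0
    have hzero : (fun y => heatConv n w r y) = fun _ => (0 : ℝ) := by
      funext y
      rw [heatConv_eq hr, integral_undef, mul_zero]
      exact fun hy => hx (integrable_heat_of_integrable hM hw hloc hd hr hy x)
    rw [hg, hzero, gradient_fun_const]
  have hint := integrable_heat_of_integrable hM hw hloc hd hr hx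
  have hgn : 0 < ‖g‖ := norm_pos_iff.2 hg0
  set h : EuclideanSpace ℝ (Fin n) := (τ * r / ‖g‖) • g with hh
  have hhn : ‖h‖ = τ * r := by
    rw [hh, norm_smul, Real.norm_eq_abs, abs_of_pos (by positivity)]
    field_simp
  have hconv : ConvexOn ℝ univ fun t : ℝ =>
      rexp ((t * ‖h‖ / r) ^ 2) * heatConv n w r (x + t • h) := by
    have := (heat_convexOn hw r hint x h).smul hc0
    refine this.congr fun t _ => ?_
    simp only [smul_eq_mul]
    rw [heatConv_eq hr]
    ring
  have hgrad := inner_gradient_le hdiff hconv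
  rw [← hg, hh, inner_smul_right, real_inner_self_eq_norm_sq, ← hh, hhn,
    mul_div_cancel_right₀ _ hr.ne'] at hgrad
  have hL : τ * r / ‖g‖ * ‖g‖ ^ 2 = τ * r * ‖g‖ := by field_simp
  rw [hL] at hgrad
  have hharn : heatConv n w r (x + h)
      ≤ ((1 + τ ^ 2) * rexp ((τ ^ 3) ^ 2)) * heatConv n w r x := by
    have e1 : ‖x - (x + h)‖ / (1 / τ ^ 2 * r) = τ ^ 3 := by
      rw [sub_add_cancel_left, norm_neg, hhn]
      field_simp
    have h1 := integral_heat_harnack hM hw hloc hd hr hx (x + h)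
    rw [e1, one_div_one_div] at h1
    rw [heatConv_eq hr, heatConv_eq hr]
    linarith [mul_le_mul_of_nonneg_left h1 hc0]
  have hfin : τ * r * ‖g‖ ≤ 4 * τ ^ 2 * heatConv n w r x := by
    have h1 := mul_le_mul_of_nonneg_left hharn (Real.exp_pos (τ ^ 2)).le
    have h2 := mul_le_mul_of_nonneg_right (harnack_const_le hτ0 hτ1) hnn
    linarith
  have hfin' : r * ‖g‖ ≤ ε * heatConv n w r x := by
    refine le_of_mul_le_mul_left ?_ hτ0
    have : ε = 4 * τ := by rw [hτ]; ring
    rw [this]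
    linarith
  calc ‖g‖ = r⁻¹ * (r * ‖g‖) := by field_simp
    _ ≤ r⁻¹ * (ε * heatConv n w r x) := by gcongr
    _ = ε * r⁻¹ * heatConv n w r x := by ring
end
end

section
/- Let w be a doubling weight on ℝⁿ with doubling constant C. Then the heat extension u(x, s²) = (w ∗ φ_s)(x) is comparable to the ball average: there exist constants c, c' > 0 depending only on n and C such that c · s⁻ⁿ w(B(x,s)) ≤ u(x, s²) ≤ c' · s⁻ⁿ w(B(x,s)) for all x ∈ ℝⁿ and s > 0. -/
/-!
The lower bound holds because the kernel is at least `π^{-n/2} e^{-1} s⁻ⁿ` on `B(x, s)`.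
For the upper bound, `e^{-t²}` is dominated by the dyadic step function
`∑ₖ e · e^{-4ᵏ/4} 1_{t < 2ᵏ}` (`exp_neg_sq_le`), while doubling gives
`w(B(x, 2ᵏ s)) ≤ Dᵏ w(B(x, s))` with `D = max C 1` (`ball_integral_pow_le`); the maximum makes
`D` positive for every real `C`, so that `c'` can be chosen before any weight is given. Integrating
term by term leaves the series `∑ₖ Dᵏ e^{-4ᵏ/4}`, which converges (`summable_coef`). The
summation is done with `∫⁻`, so that the same estimate (`lintegral_heat_le`) also shows that the
heat integrand is integrable; without this the Bochner integral could take its junk value `0`,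
and the lower bound would fail.
-/

open MeasureTheory Metric Set Real Filter
noncomputable section

/-- `w` is a doubling weight on ℝⁿ with doubling constant `C`: it is nonnegative,
locally integrable, nontrivial (every ball has positive mass) and satisfies the
doubling inequality for the measure `w dx`. -/
def DoublingWeight (n : ℕ) (C : ℝ) (w : EuclideanSpace ℝ (Fin n) → ℝ) : Prop :=
  (∀ x, 0 ≤ w x) ∧ MeasureTheory.LocallyIntegrable w ∧
  (∀ (x : EuclideanSpace ℝ (Fin n)) (r : ℝ), 0 < r → 0 < ∫ y in Metric.ball x r, w y) ∧
  (∀ (x : EuclideanSpace ℝ (Fin n)) (r : ℝ), 0 < r →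
    (∫ y in Metric.ball x (2*r), w y) ≤ C * ∫ y in Metric.ball x r, w y)

/-- The height of the `k`-th dyadic step dominating `t ↦ e^{-t²}`; the factor `e` makes the
`0`-th step at least `1`. -/
def coef (k : ℕ) : ℝ := Real.exp 1 * Real.exp (-(4 ^ k / 4))

lemma coef_pos (k : ℕ) : 0 < coef k := by unfold coef; positivity

lemma exp_neg_sq_le (t : ℝ) : ∃ k : ℕ, t < 2 ^ k ∧ Real.exp (-t ^ 2) ≤ coef k := by
  rcases lt_or_ge t 1 with h | h
  · refine ⟨0, by simpa using h, ?_⟩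
    unfold coef
    rw [← Real.exp_add]
    apply Real.exp_le_exp.2
    nlinarith [sq_nonneg t]
  · obtain ⟨k, hk, hk'⟩ := exists_nat_pow_near h (by norm_num : (1 : ℝ) < 2)
    refine ⟨k + 1, hk', ?_⟩
    unfold coef
    rw [← Real.exp_add]
    apply Real.exp_le_exp.2
    have h4 : (4 : ℝ) ^ k ≤ t ^ 2 := by
      have h1 : ((2 : ℝ) ^ k) ^ 2 ≤ t ^ 2 := pow_le_pow_left₀ (by positivity) hk 2
      rwa [← pow_mul, mul_comm, pow_mul, show (2 : ℝ) ^ 2 = 4 by norm_num] at h1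
    rw [pow_succ (4 : ℝ) k]
    linarith

lemma summable_coef (D : ℝ) (hD : 0 < D) : Summable fun k => coef k * D ^ k := by
  have hpos : ∀ k, 0 < coef k * D ^ k := fun k => mul_pos (coef_pos k) (pow_pos hD k)
  have hratio : ∀ k : ℕ, ‖coef (k + 1) * D ^ (k + 1)‖ / ‖coef k * D ^ k‖
      = D * Real.exp (-((3 / 4) * 4 ^ k)) := by
    intro k
    rw [Real.norm_of_nonneg (hpos _).le, Real.norm_of_nonneg (hpos _).le,
      div_eq_iff (hpos k).ne']
    unfold coef
    rw [show (-((4 : ℝ) ^ (k + 1) / 4)) = -((3 / 4) * 4 ^ k) + -(4 ^ k / 4) by ring,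
      Real.exp_add]
    ring
  refine summable_of_ratio_test_tendsto_lt_one (l := 0) zero_lt_one
    (Eventually.of_forall fun k => (hpos k).ne') ?_
  simp_rw [hratio]
  have h4 : Tendsto (fun k : ℕ => (3 / 4 : ℝ) * 4 ^ k) atTop atTop :=
    (tendsto_pow_atTop_atTop_of_one_lt (by norm_num)).const_mul_atTop (by norm_num)
  simpa using (Real.tendsto_exp_neg_atTop_nhds_zero.comp h4).const_mul D

lemma ball_integral_pow_le {n : ℕ} {C : ℝ} {w : EuclideanSpace ℝ (Fin n) → ℝ}
    (hw : DoublingWeight n C w) (x : EuclideanSpace ℝ (Fin n)) {s : ℝ} (hs : 0 < s) (k : ℕ) :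
    ∫ y in ball x (2 ^ k * s), w y ≤ max C 1 ^ k * ∫ y in ball x s, w y := by
  induction k with
  | zero => simp
  | succ k ih =>
    have hk : 0 < 2 ^ k * s := by positivity
    calc ∫ y in ball x (2 ^ (k + 1) * s), w y
        = ∫ y in ball x (2 * (2 ^ k * s)), w y := by rw [pow_succ]; congr 3; ring
      _ ≤ C * ∫ y in ball x (2 ^ k * s), w y := hw.2.2.2 x _ hk
      _ ≤ max C 1 * ∫ y in ball x (2 ^ k * s), w y :=
          mul_le_mul_of_nonneg_right (le_max_left _ _) (hw.2.2.1 x _ hk).le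
      _ ≤ max C 1 * (max C 1 ^ k * ∫ y in ball x s, w y) := by gcongr
      _ = max C 1 ^ (k + 1) * ∫ y in ball x s, w y := by ring

lemma integrableOn_ball {n : ℕ} {w : EuclideanSpace ℝ (Fin n) → ℝ}
    (hw : LocallyIntegrable w) (x : EuclideanSpace ℝ (Fin n)) (r : ℝ) :
    IntegrableOn w (ball x r) :=
  (hw.integrableOn_isCompact (isCompact_closedBall x r)).mono_set ball_subset_closedBall

lemma norm_smul_sub {n : ℕ} (x z : EuclideanSpace ℝ (Fin n)) {s : ℝ} (hs : 0 < s) :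
    ‖s⁻¹ • (x - z)‖ = dist z x / s := by
  rw [norm_smul, norm_inv, Real.norm_of_nonneg hs.le, dist_comm, dist_eq_norm]
  field_simp

/-- The upper bound before normalization, in a form that does not presuppose integrability. -/
lemma lintegral_heat_le {n : ℕ} {C : ℝ} {w : EuclideanSpace ℝ (Fin n) → ℝ}
    (hw : DoublingWeight n C w) (x : EuclideanSpace ℝ (Fin n)) {s : ℝ} (hs : 0 < s) :
    ∫⁻ z, ENNReal.ofReal (Real.exp (-‖s⁻¹ • (x - z)‖ ^ 2) * w z) ≤
      ENNReal.ofReal ((∑' k, coef k * max C 1 ^ k) * ∫ z in ball x s, w z) := by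
  have hD : 0 < max C 1 := by positivity
  have hW : 0 ≤ ∫ z in ball x s, w z := (hw.2.2.1 x s hs).le
  have hmeas : AEMeasurable (fun z => ENNReal.ofReal (w z)) :=
    hw.2.1.aestronglyMeasurable.aemeasurable.ennreal_ofReal
  calc ∫⁻ z, ENNReal.ofReal (Real.exp (-‖s⁻¹ • (x - z)‖ ^ 2) * w z)
      ≤ ∫⁻ z, ∑' k, (ball x (2 ^ k * s)).indicator
          (fun z => ENNReal.ofReal (coef k) * ENNReal.ofReal (w z)) z := by
        refine lintegral_mono fun z => ?_
        obtain ⟨k, hk, hk'⟩ := exp_neg_sq_le ‖s⁻¹ • (x - z)‖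
        refine le_trans ?_ (ENNReal.le_tsum k)
        rw [norm_smul_sub x z hs, div_lt_iff₀ hs] at hk
        rw [indicator_of_mem (mem_ball.2 hk), ← ENNReal.ofReal_mul (coef_pos k).le]
        exact ENNReal.ofReal_le_ofReal (mul_le_mul_of_nonneg_right hk' (hw.1 z))
    _ = ∑' k, ENNReal.ofReal (coef k) * ∫⁻ z in ball x (2 ^ k * s), ENNReal.ofReal (w z) := by
        rw [lintegral_tsum fun k => (hmeas.const_mul _).indicator measurableSet_ball]
        refine tsum_congr fun k => ?_
        rw [lintegral_indicator measurableSet_ball, lintegral_const_mul' _ _ ENNReal.ofReal_ne_top]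
    _ ≤ ∑' k, ENNReal.ofReal (coef k * max C 1 ^ k * ∫ z in ball x s, w z) := by
        refine ENNReal.tsum_le_tsum fun k => ?_
        rw [← ofReal_integral_eq_lintegral_ofReal (integrableOn_ball hw.2.1 x _)
          (Eventually.of_forall hw.1), ← ENNReal.ofReal_mul (coef_pos k).le, mul_assoc]
        exact ENNReal.ofReal_le_ofReal
          (mul_le_mul_of_nonneg_left (ball_integral_pow_le hw x hs k) (coef_pos k).le)
    _ = ENNReal.ofReal ((∑' k, coef k * max C 1 ^ k) * ∫ z in ball x s, w z) := by
        rw [← tsum_mul_right, ENNReal.ofReal_tsum_of_nonneg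
          (fun k => mul_nonneg (mul_nonneg (coef_pos k).le (by positivity)) hW)
          ((summable_coef _ hD).mul_right _)]

lemma integrable_heat {n : ℕ} {C : ℝ} {w : EuclideanSpace ℝ (Fin n) → ℝ}
    (hw : DoublingWeight n C w) (x : EuclideanSpace ℝ (Fin n)) {s : ℝ} (hs : 0 < s) :
    Integrable fun z => Real.exp (-‖s⁻¹ • (x - z)‖ ^ 2) * w z := by
  refine ⟨(Continuous.aestronglyMeasurable (by fun_prop)).mul hw.2.1.aestronglyMeasurable, ?_⟩
  rw [hasFiniteIntegral_iff_ofReal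
    (Eventually.of_forall fun z => mul_nonneg (Real.exp_pos _).le (hw.1 z))]
  exact (lintegral_heat_le hw x hs).trans_lt ENNReal.ofReal_lt_top

/-- For a doubling weight `w` with constant `C` the heat extension is
comparable to the ball average: there are `c, c' > 0` depending only on `n, C` with
`c s⁻ⁿ w(B(x,s)) ≤ (w ∗ φ_s)(x) ≤ c' s⁻ⁿ w(B(x,s))` for all `x`, `s > 0`. -/
theorem heat_extension_comparable (n : ℕ) (C : ℝ) :
    ∃ c > (0:ℝ), ∃ c' > (0:ℝ), ∀ w : EuclideanSpace ℝ (Fin n) → ℝ,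
      DoublingWeight n C w →
      ∀ (x : EuclideanSpace ℝ (Fin n)) (s : ℝ), 0 < s →
        c * ((s^n)⁻¹ * ∫ z in Metric.ball x s, w z) ≤ heatConv n w s x ∧
        heatConv n w s x ≤ c' * ((s^n)⁻¹ * ∫ z in Metric.ball x s, w z) := by
  have hD : 0 < max C 1 := by positivity
  have hS : 0 < ∑' k, coef k * max C 1 ^ k :=
    (summable_coef _ hD).tsum_pos (fun k => (mul_pos (coef_pos k) (pow_pos hD k)).le) 0
      (mul_pos (coef_pos 0) (pow_pos hD 0))
  have hP : 0 < Real.pi ^ (-(n:ℝ)/2) := Real.rpow_pos_of_pos Real.pi_pos _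
  refine ⟨Real.pi ^ (-(n:ℝ)/2) * Real.exp (-1), by positivity,
    Real.pi ^ (-(n:ℝ)/2) * ∑' k, coef k * max C 1 ^ k, by positivity, ?_⟩
  intro w hw x s hs
  have hint := integrable_heat hw x hs
  have hnn : ∀ z, 0 ≤ Real.exp (-‖s⁻¹ • (x - z)‖ ^ 2) * w z :=
    fun z => mul_nonneg (Real.exp_pos _).le (hw.1 z)
  have hheat : heatConv n w s x = Real.pi ^ (-(n:ℝ)/2) * (s ^ n)⁻¹ *
      ∫ z, Real.exp (-‖s⁻¹ • (x - z)‖ ^ 2) * w z := by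
    rw [heatConv, ← integral_const_mul]
    congr 1 with z
    rw [gauss]
    ring
  have hK : 0 ≤ Real.pi ^ (-(n:ℝ)/2) * (s ^ n)⁻¹ := by positivity
  have hlow : Real.exp (-1) * ∫ z in ball x s, w z ≤
      ∫ z, Real.exp (-‖s⁻¹ • (x - z)‖ ^ 2) * w z := by
    rw [← integral_const_mul]
    refine le_trans ?_ (setIntegral_le_integral (s := ball x s) hint (Eventually.of_forall hnn))
    refine setIntegral_mono_on ((integrableOn_ball hw.2.1 x s).const_mul _) hint.integrableOn
      measurableSet_ball fun z hz => mul_le_mul_of_nonneg_right (Real.exp_le_exp.2 ?_) (hw.1 z)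
    have h1 : ‖s⁻¹ • (x - z)‖ ≤ 1 := by
      rw [norm_smul_sub x z hs, div_le_one hs]
      exact (mem_ball.1 hz).le
    nlinarith [norm_nonneg (s⁻¹ • (x - z))]
  have hup : ∫ z, Real.exp (-‖s⁻¹ • (x - z)‖ ^ 2) * w z ≤
      (∑' k, coef k * max C 1 ^ k) * ∫ z in ball x s, w z := by
    have h := lintegral_heat_le hw x hs
    rw [← ofReal_integral_eq_lintegral_ofReal hint (Eventually.of_forall hnn)] at h
    exact (ENNReal.ofReal_le_ofReal_iff (mul_nonneg hS.le (hw.2.2.1 x s hs).le)).1 h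
  rw [hheat]
  constructor
  · calc _ = Real.pi ^ (-(n:ℝ)/2) * (s ^ n)⁻¹ * (Real.exp (-1) * ∫ z in ball x s, w z) := by ring
      _ ≤ _ := mul_le_mul_of_nonneg_left hlow hK
  · calc _ ≤ Real.pi ^ (-(n:ℝ)/2) * (s ^ n)⁻¹ *
          ((∑' k, coef k * max C 1 ^ k) * ∫ z in ball x s, w z) :=
          mul_le_mul_of_nonneg_left hup hK
      _ = _ := by ring
end
end
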